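/- Let f = p/q be a rational function of two real variables bounded near v₀ = (x₀,y₀) and let d ∈ D_f(v₀) be a limiting value of f at v₀. Then there exists a sequence v_n → v₀ with v_n ≠ v₀ such that f(v_n) → d and, moreover, for every rational function g = r/s of two real variables bounded near v₀, one has s(v_n) ≠ 0 for all sufficiently large n and g(v_n) converges to a finite limit. -/

import Mathlib

open MvPolynomial Filter Topology

/-- Evaluation of a two-variable real polynomial at a point of `ℝ²`. -/
noncomputable def pev (p : MvPolynomial (Fin 2) ℝ) (v : ℝ × ℝ) : ℝ :=
  MvPolynomial.eval ![v.1, v.2] p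

/-- `p/q` is bounded near `v₀`. -/
def BoundedNear (p q : MvPolynomial (Fin 2) ℝ) (v₀ : ℝ × ℝ) : Prop :=
  ∃ U ∈ nhds v₀, ∃ M : ℝ, ∀ v ∈ U, pev q v ≠ 0 → |pev p v / pev q v| ≤ M

/-- The set of limiting values of `p/q` at `v₀`. -/
def LimVals (p q : MvPolynomial (Fin 2) ℝ) (v₀ : ℝ × ℝ) : Set ℝ :=
  {d | ∃ v : ℕ → ℝ × ℝ, Filter.Tendsto v Filter.atTop (nhds v₀) ∧ (∀ n, v n ≠ v₀) ∧
    (∀ n, pev q (v n) ≠ 0) ∧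
    Filter.Tendsto (fun n => pev p (v n) / pev q (v n)) Filter.atTop (nhds d)}

/-!
Evaluation at a point is a linear functional on the space of polynomials. Given functionals `a x` on
a finite-dimensional space, rescale them by positive factors to norm one and pass to a limit `u ≠ 0`
along a refinement of the filter: the sign of `a x w` is then settled for every `w` with `u w ≠ 0`,
and the remaining `w` lie in `ker u`, which has smaller dimension. A diagonal argument over the
total degree shows that *every* sequence of points has a subsequence along which every polynomial
has eventually constant sign. Applied to `(r - c * s) * s` for all real `c`, this rules out any
oscillation of `r / s`, which therefore converges as soon as it is bounded and eventually defined.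
So the sequence sought can be found among the subsequences of any sequence realising `d`.

For coprime `r` and `s`, boundedness near `v₀` gives `|r| ≤ M |s|` on a neighbourhood, so zeros of
`s` there are common zeros of `r` and `s`; by elimination there are only finitely many of those.
-/

section SignStabilization

variable {X V : Type*} [AddCommGroup V] [Module ℝ V]

theorem exists_le_tendsto_smul_dual [FiniteDimensional ℝ V] {f : Filter X}
    [f.NeBot] [f.IsCountablyGenerated] {a : X → Module.Dual ℝ V} (ha : ∀ᶠ x in f, a x ≠ 0) :
    ∃ g ≤ f, g.NeBot ∧ g.IsCountablyGenerated ∧ ∃ u : Module.Dual ℝ V, u ≠ 0 ∧ ∃ c : X → ℝ,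
      (∀ᶠ x in g, 0 < c x) ∧ ∀ w, Tendsto (fun x ↦ c x * a x w) g (𝓝 (u w)) := by
  let e := ((Module.finBasis ℝ V).constr ℝ (M' := ℝ)).symm
  let m : X → Fin (Module.finrank ℝ V) → ℝ := fun x ↦ ‖e (a x)‖⁻¹ • e (a x)
  have hpos : ∀ᶠ x in f, 0 < ‖e (a x)‖⁻¹ := by
    filter_upwards [ha] with x hx
    exact inv_pos.2 (norm_pos_iff.2 (e.map_ne_zero_iff.2 hx))
  have hm : ∀ᶠ x in f, m x ∈ Metric.sphere 0 1 := by
    filter_upwards [ha] with x hx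
    exact mem_sphere_zero_iff_norm.2 (norm_smul_inv_norm (𝕜 := ℝ) (e.map_ne_zero_iff.2 hx))
  obtain ⟨y, hy, hcluster⟩ :=
    (isCompact_sphere 0 1).exists_mapClusterPt_of_frequently hm.frequently
  refine ⟨comap m (𝓝 y) ⊓ f, inf_le_right, neBot_inf_comap_iff_map'.2 hcluster, inferInstance,
    e.symm y, ?_, fun x ↦ ‖e (a x)‖⁻¹, hpos.filter_mono inf_le_right, fun w ↦ ?_⟩
  · exact e.symm.map_ne_zero_iff.2 (ne_zero_of_mem_unit_sphere ⟨y, hy⟩)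
  · have hcont : Continuous fun z ↦ e.symm z w :=
      (LinearMap.applyₗ w ∘ₗ e.symm.toLinearMap).continuous_of_finiteDimensional
    refine ((hcont.tendsto y).comp (tendsto_comap.mono_left inf_le_left)).congr fun x ↦ ?_
    simp only [Function.comp_apply, m, map_smul, LinearEquiv.symm_apply_apply,
      LinearMap.smul_apply, smul_eq_mul]

theorem eventuallyConst_sign_of_tendsto {g : Filter X} {c t : X → ℝ} {l : ℝ}
    (hc : ∀ᶠ x in g, 0 < c x) (ht : Tendsto (fun x ↦ c x * t x) g (𝓝 l)) (hl : l ≠ 0) :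
    EventuallyConst (fun x ↦ SignType.sign (t x)) g := by
  have hsign : Tendsto (fun x ↦ SignType.sign (c x * t x)) g (𝓝 (SignType.sign l)) :=
    (continuousAt_sign_of_ne_zero hl).tendsto.comp ht
  rw [nhds_discrete] at hsign
  refine (EventuallyConst.of_tendsto hsign).congr ?_
  filter_upwards [hc] with x hx
  rw [sign_mul, sign_pos hx, one_mul]

theorem exists_le_eventuallyConst_sign_of_finiteDimensional [FiniteDimensional ℝ V]
    (f : Filter X) [f.NeBot] [f.IsCountablyGenerated] (a : X → Module.Dual ℝ V) :
    ∃ g ≤ f, g.NeBot ∧ g.IsCountablyGenerated ∧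
      ∀ w, EventuallyConst (fun x ↦ SignType.sign (a x w)) g := by
  induction h : Module.finrank ℝ V using Nat.strong_induction_on generalizing V f with
  | _ n ih =>
  subst h
  by_cases ha : ∃ᶠ x in f, a x = 0
  · refine ⟨f ⊓ 𝓟 {x | a x = 0}, inf_le_left, frequently_mem_iff_neBot.1 ha, inferInstance,
      fun w ↦ (EventuallyConst.const 0).congr ?_⟩
    filter_upwards [mem_inf_of_right (mem_principal_self _)] with x (hx : a x = 0)
    rw [hx, LinearMap.zero_apply, sign_zero]
  · obtain ⟨g, hgf, _, _, u, hu, c, hc, hlim⟩ :=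
      exists_le_tendsto_smul_dual (not_frequently.1 ha)
    have hker : Module.finrank ℝ (LinearMap.ker u) < Module.finrank ℝ V :=
      Submodule.finrank_lt (mt LinearMap.ker_eq_top.1 hu)
    obtain ⟨k, hkg, hk, hk', hconst⟩ :=
      ih _ hker g (fun x ↦ a x ∘ₗ (LinearMap.ker u).subtype) rfl
    refine ⟨k, hkg.trans hgf, hk, hk', fun w ↦ ?_⟩
    by_cases hw : u w = 0
    · exact hconst ⟨w, hw⟩
    · exact (eventuallyConst_sign_of_tendsto hc (hlim w) hw).anti hkg

theorem exists_le_forall_of_forall_exists_le {P : ℕ → Filter X → Prop}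
    (hP : ∀ k f g, g ≤ f → P k f → P k g)
    (h : ∀ k (f : Filter X), f.NeBot → f.IsCountablyGenerated →
      ∃ g ≤ f, g.NeBot ∧ g.IsCountablyGenerated ∧ P k g)
    (f : Filter X) [hf : f.NeBot] [hf' : f.IsCountablyGenerated] :
    ∃ g ≤ f, g.NeBot ∧ g.IsCountablyGenerated ∧ ∀ k, P k g := by
  choose! next hle hne hcg hnext using h
  let F : ℕ → Filter X := fun n ↦ Nat.rec f next n
  have hF : ∀ n, (F n).NeBot ∧ (F n).IsCountablyGenerated := fun n ↦ by
    induction n with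
    | zero => exact ⟨hf, hf'⟩
    | succ n ih => exact ⟨hne n _ ih.1 ih.2, hcg n _ ih.1 ih.2⟩
  have hanti : Antitone F := antitone_nat_of_succ_le fun n ↦ hle n _ (hF n).1 (hF n).2
  have (n : ℕ) : (F n).IsCountablyGenerated := (hF n).2
  exact ⟨iInf F, iInf_le F 0, iInf_neBot_of_directed' hanti.directed_ge fun n ↦ (hF n).1,
    iInf.isCountablyGenerated _, fun k ↦ hP k _ _ (iInf_le F (k + 1)) (hnext k _ (hF k).1 (hF k).2)⟩

theorem exists_le_eventuallyConst_sign_of_forall_exists_mem {W : ℕ → Submodule ℝ V}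
    [∀ k, FiniteDimensional ℝ (W k)] (hW : ∀ w, ∃ k, w ∈ W k)
    (f : Filter X) [f.NeBot] [f.IsCountablyGenerated] (a : X → Module.Dual ℝ V) :
    ∃ g ≤ f, g.NeBot ∧ g.IsCountablyGenerated ∧
      ∀ w, EventuallyConst (fun x ↦ SignType.sign (a x w)) g := by
  obtain ⟨g, hgf, hg, hg', hconst⟩ := exists_le_forall_of_forall_exists_le
    (P := fun k g ↦ ∀ w : W k, EventuallyConst (fun x ↦ SignType.sign (a x w)) g)
    (fun k f g hgf hf w ↦ (hf w).anti hgf)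
    (fun k f _ _ ↦ exists_le_eventuallyConst_sign_of_finiteDimensional f
      fun x ↦ a x ∘ₗ (W k).subtype) f
  refine ⟨g, hgf, hg, hg', fun w ↦ ?_⟩
  obtain ⟨k, hk⟩ := hW w
  exact hconst k ⟨w, hk⟩

end SignStabilization

theorem exists_le_eventuallyConst_sign_eval {X σ : Type*} [Finite σ] (f : Filter X) [f.NeBot]
    [f.IsCountablyGenerated] (x : X → σ → ℝ) :
    ∃ g ≤ f, g.NeBot ∧ g.IsCountablyGenerated ∧
      ∀ h : MvPolynomial σ ℝ, EventuallyConst (fun t ↦ SignType.sign (eval (x t) h)) g :=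
  exists_le_eventuallyConst_sign_of_forall_exists_mem (W := restrictTotalDegree σ ℝ)
    (fun h ↦ ⟨h.totalDegree, (mem_restrictTotalDegree _ _ _).2 le_rfl⟩) f
    fun t ↦ (aeval (x t)).toLinearMap

theorem exists_strictMono_eventuallyConst_sign_eval {σ : Type*} [Finite σ] (x : ℕ → σ → ℝ) :
    ∃ φ : ℕ → ℕ, StrictMono φ ∧ ∀ h : MvPolynomial σ ℝ,
      EventuallyConst (fun n ↦ SignType.sign (eval (x (φ n)) h)) atTop := by
  obtain ⟨g, hg, _, _, hconst⟩ := exists_le_eventuallyConst_sign_eval atTop x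
  obtain ⟨ψ, hψ⟩ := exists_seq_tendsto g
  obtain ⟨φ, hφ, hψφ⟩ := strictMono_subseq_of_tendsto_atTop (hψ.mono_right hg)
  exact ⟨ψ ∘ φ, hψφ, fun h ↦ (hconst h).comp_tendsto (hψ.comp hφ.tendsto_atTop)⟩

theorem exists_tendsto_of_eventuallyConst_sign_sub {X : Type*} {g : Filter X} {u : X → ℝ} {M : ℝ}
    (hu : ∀ᶠ x in g, |u x| ≤ M)
    (hconst : ∀ c, EventuallyConst (fun x ↦ SignType.sign (u x - c)) g) :
    ∃ l, Tendsto u g (𝓝 l) := by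
  refine tendsto_of_no_upcrossings dense_univ (fun a _ b _ hab ⟨hlt, hgt⟩ ↦ ?_)
    (isBoundedUnder_of_eventually_le (hu.mono fun x hx ↦ (abs_le.1 hx).2))
    (isBoundedUnder_of_eventually_ge (hu.mono fun x hx ↦ (abs_le.1 hx).1))
  have hside : (∀ᶠ x in g, u x < a) ∨ ∀ᶠ x in g, ¬u x < a := by
    simpa only [Function.comp_apply, sign_eq_neg_one_iff, sub_neg] using
      eventuallyConst_pred.1 ((hconst a).comp (· = -1))
  rcases hside with hbelow | hnot_below
  · obtain ⟨x, hbx, hxa⟩ := (hgt.and_eventually hbelow).exists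
    exact (hbx.trans hxa).not_gt hab
  · exact hlt hnot_below

theorem sign_div_sub {a b : ℝ} (hb : b ≠ 0) (c : ℝ) :
    SignType.sign (a / b - c) = SignType.sign ((a - c * b) * b) := by
  have hdiv : (a - c * b) * b = b ^ 2 * (a / b - c) := by field_simp
  rw [hdiv, sign_mul, sign_pos (sq_pos_of_ne_zero hb), one_mul]

theorem exists_tendsto_div_of_eventuallyConst_sign_eval {X σ : Type*} {g : Filter X}
    {x : X → σ → ℝ}
    (hconst : ∀ h : MvPolynomial σ ℝ, EventuallyConst (fun t ↦ SignType.sign (eval (x t) h)) g)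
    {r s : MvPolynomial σ ℝ} {M : ℝ} (hs : ∀ᶠ t in g, eval (x t) s ≠ 0)
    (hM : ∀ᶠ t in g, |eval (x t) r / eval (x t) s| ≤ M) :
    ∃ l, Tendsto (fun t ↦ eval (x t) r / eval (x t) s) g (𝓝 l) := by
  refine exists_tendsto_of_eventuallyConst_sign_sub hM fun c ↦
    (hconst ((r - C c * s) * s)).congr ?_
  filter_upwards [hs] with t ht
  simp only [sign_div_sub ht, map_mul, map_sub, eval_C]

section CommonZeros

open scoped Polynomial Polynomial.Bivariate nonZeroDivisors

theorem isCoprime_map_algebraMap_of_isRelPrime {R K : Type*} [CommRing R] [IsDomain R]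
    [IsGCDMonoid R] [Field K] [Algebra R K] [IsFractionRing R K] {f g : R[X]}
    (h : IsRelPrime f g) : IsCoprime (f.map (algebraMap R K)) (g.map (algebraMap R K)) := by
  have : NormalizedGCDMonoid R := Classical.arbitrary _
  refine IsRelPrime.isCoprime fun d hdf hdg ↦ ?_
  have hd : d ≠ 0 := by
    rintro rfl
    rw [zero_dvd_iff, Polynomial.map_eq_zero_iff (IsFractionRing.injective R K)] at hdf hdg
    subst hdf hdg
    exact not_isUnit_zero (h dvd_rfl dvd_rfl)
  let P := IsLocalization.integerNormalization R⁰ d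
  have hPd : P.primPart.map (algebraMap R K) ∣ d := by
    obtain ⟨b, hb, hP⟩ := IsLocalization.integerNormalization_spec R⁰ d
    have hb0 : IsUnit (Polynomial.C (algebraMap R K b)) :=
      Polynomial.isUnit_C.2 (IsLocalization.map_units K ⟨b, hb⟩)
    rw [← hb0.dvd_mul_left, ← Polynomial.smul_eq_C_mul, algebraMap_smul, ← hP]
    exact Polynomial.map_dvd _ P.primPart_dvd
  have hP : P.primPart.IsPrimitive := P.isPrimitive_primPart
  exact Polynomial.isUnit_or_eq_zero_of_isUnit_integerNormalization_primPart hd <|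
    h (hP.dvd_of_fraction_map_dvd_fraction_map (hPd.trans hdf))
      (hP.dvd_of_fraction_map_dvd_fraction_map (hPd.trans hdg))

theorem exists_mul_add_mul_eq_C_of_isRelPrime {R : Type*} [CommRing R] [IsDomain R]
    [IsGCDMonoid R] {f g : R[X]} (h : IsRelPrime f g) :
    ∃ c ≠ 0, ∃ u v : R[X], u * f + v * g = Polynomial.C c := by
  let K := FractionRing R
  obtain ⟨a, b, hab⟩ := isCoprime_map_algebraMap_of_isRelPrime (K := K) h
  obtain ⟨α, hα, ha⟩ := IsLocalization.integerNormalization_spec R⁰ a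
  obtain ⟨β, hβ, hb⟩ := IsLocalization.integerNormalization_spec R⁰ b
  refine ⟨α * β, nonZeroDivisors.ne_zero (mul_mem hα hβ),
    β • IsLocalization.integerNormalization R⁰ a, α • IsLocalization.integerNormalization R⁰ b,
    Polynomial.map_injective _ (IsFractionRing.injective R K) ?_⟩
  simp only [Polynomial.map_add, Polynomial.map_mul, Polynomial.map_smul, ha, hb,
    Polynomial.map_C, algebraMap_smul]
  calc _ = (α * β) • (a * f.map (algebraMap R K) + b * g.map (algebraMap R K)) := by
        simp only [smul_mul_assoc, smul_smul, smul_add, mul_comm]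
    _ = _ := by rw [hab, Algebra.smul_def, mul_one, Polynomial.algebraMap_apply]

theorem finite_setOf_exists_common_zero {K : Type*} [Field K] {f g : K[X][Y]} (h : IsRelPrime f g) :
    {x : K | ∃ y, f.evalEval x y = 0 ∧ g.evalEval x y = 0}.Finite := by
  obtain ⟨c, hc, u, v, huv⟩ := exists_mul_add_mul_eq_C_of_isRelPrime h
  refine (Polynomial.finite_setOfPred_isRoot hc).subset fun x ⟨y, hf, hg⟩ ↦ ?_
  simpa [hf, hg, Polynomial.evalEval_C] using (congrArg (Polynomial.evalEval x y) huv).symm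

theorem evalEval_swap {R : Type*} [CommSemiring R] (x y : R) (f : R[X][Y]) :
    (Polynomial.Bivariate.swap f).evalEval x y = f.evalEval y x := by
  rw [← Polynomial.coe_aevalAeval_eq_evalEval, ← Polynomial.coe_aevalAeval_eq_evalEval,
    Polynomial.Bivariate.aevalAeval_swap]

theorem finite_setOf_common_zero {K : Type*} [Field K] {f g : K[X][Y]} (h : IsRelPrime f g) :
    {v : K × K | f.evalEval v.1 v.2 = 0 ∧ g.evalEval v.1 v.2 = 0}.Finite := by
  let swap := Polynomial.Bivariate.swap (R := K)
  have hswap : IsRelPrime (swap f) (swap g) :=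
    IsRelPrime.of_map swap <| by simpa only [swap, Polynomial.Bivariate.swap_swap_apply] using h
  refine ((finite_setOf_exists_common_zero h).prod
    (finite_setOf_exists_common_zero hswap)).subset fun v hv ↦ ⟨⟨v.2, hv⟩, v.1, ?_⟩
  change (swap f).evalEval v.2 v.1 = 0 ∧ (swap g).evalEval v.2 v.1 = 0
  rwa [evalEval_swap, evalEval_swap]

theorem eval_equivMvPolynomial {R : Type*} [CommSemiring R] (x y : R) (f : R[X][Y]) :
    eval ![x, y] (Polynomial.Bivariate.equivMvPolynomial R f) = f.evalEval x y := by
  have hcomp : (aeval ![x, y]).comp (Polynomial.Bivariate.equivMvPolynomial R).toAlgHom =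
      Polynomial.aevalAeval x y := by
    ext <;> simp
  rw [← Polynomial.coe_aevalAeval_eq_evalEval, ← hcomp]
  rfl

end CommonZeros

theorem dense_setOf_eval_ne_zero {𝕜 σ : Type*} [NontriviallyNormedField 𝕜] [Finite σ]
    {s : MvPolynomial σ 𝕜} (hs : s ≠ 0) : Dense {x | eval x s ≠ 0} := by
  refine dense_iff_inter_open.2 fun U hU ⟨x, hx⟩ ↦ ?_
  obtain ⟨u, hu, huU⟩ := isOpen_pi_iff'.1 hU x hx
  by_contra hempty
  refine hs (funext_set u (fun i ↦ infinite_of_mem_nhds (x i) ((hu i).1.mem_nhds (hu i).2)) ?_)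
  intro y hy
  by_contra hne
  exact hempty ⟨y, huU hy, by simpa using hne⟩

theorem eventually_abs_le_mul_abs_of_dense {E : Type*} [TopologicalSpace E] {r s : E → ℝ}
    (hr : Continuous r) (hs : Continuous s) (hdense : Dense {v | s v ≠ 0}) {v₀ : E} {M : ℝ}
    (hM : ∀ᶠ v in 𝓝 v₀, s v ≠ 0 → |r v / s v| ≤ M) : ∀ᶠ v in 𝓝 v₀, |r v| ≤ M * |s v| := by
  obtain ⟨U, hU, hUo, hv₀⟩ := eventually_nhds_iff.1 hM
  have hclosed : IsClosed {v | |r v| ≤ M * |s v|} :=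
    isClosed_le hr.abs (continuous_const.mul hs.abs)
  have hsub : U ∩ {v | s v ≠ 0} ⊆ {v | |r v| ≤ M * |s v|} := fun v ⟨hvU, hsv⟩ ↦ by
    have hle := hU v hvU hsv
    rwa [abs_div, div_le_iff₀ (abs_pos.2 hsv)] at hle
  filter_upwards [hUo.mem_nhds hv₀] with v hv
  exact closure_minimal hsub hclosed (hdense.open_subset_closure_inter hUo hv)

theorem continuous_pev (h : MvPolynomial (Fin 2) ℝ) : Continuous (pev h) :=
  (continuous_eval h).comp (Homeomorph.finTwoArrow (X := ℝ)).symm.continuous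

theorem dense_setOf_pev_ne_zero {s : MvPolynomial (Fin 2) ℝ} (hs : s ≠ 0) :
    Dense {v | pev s v ≠ 0} :=
  (dense_setOf_eval_ne_zero hs).preimage (Homeomorph.finTwoArrow (X := ℝ)).symm.isOpenMap

theorem finite_setOf_pev_common_zero {r s : MvPolynomial (Fin 2) ℝ} (h : IsRelPrime r s) :
    {v | pev r v = 0 ∧ pev s v = 0}.Finite := by
  let e := Polynomial.Bivariate.equivMvPolynomial ℝ
  have hrel : IsRelPrime (e.symm r) (e.symm s) := IsRelPrime.of_map e <| by simpa using h
  have hfin := finite_setOf_common_zero hrel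
  simpa only [pev, ← eval_equivMvPolynomial, e, AlgEquiv.apply_symm_apply] using hfin

theorem BoundedNear.eventually_pev_ne_zero {r s : MvPolynomial (Fin 2) ℝ} {v₀ : ℝ × ℝ}
    (hb : BoundedNear r s v₀) (hs : s ≠ 0) (h : IsRelPrime r s) :
    ∀ᶠ v in 𝓝[≠] v₀, pev s v ≠ 0 := by
  obtain ⟨U, hU, M, hM⟩ := hb
  have hle : ∀ᶠ v in 𝓝 v₀, |pev r v| ≤ M * |pev s v| :=
    eventually_abs_le_mul_abs_of_dense (continuous_pev r) (continuous_pev s)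
      (dense_setOf_pev_ne_zero hs) (mem_of_superset hU hM)
  have hcommon : ∀ᶠ v in 𝓝[≠] v₀, ¬(pev r v = 0 ∧ pev s v = 0) :=
    nhdsNE_le_cofinite v₀ (finite_setOf_pev_common_zero h).compl_mem_cofinite
  filter_upwards [hle.filter_mono nhdsWithin_le_nhds, hcommon] with v hv hne hs0
  exact hne ⟨by simpa [hs0] using hv, hs0⟩

theorem limval_attained_along_character_sequence_general {v₀ : ℝ × ℝ} {v : ℕ → ℝ × ℝ}
    (hv : Tendsto v atTop (𝓝 v₀)) (hne : ∀ n, v n ≠ v₀) :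
    ∃ φ : ℕ → ℕ, StrictMono φ ∧ ∀ r s : MvPolynomial (Fin 2) ℝ, s ≠ 0 →
      (∀ e : MvPolynomial (Fin 2) ℝ, e ∣ r → e ∣ s → IsUnit e) → BoundedNear r s v₀ →
      (∀ᶠ n in atTop, pev s (v (φ n)) ≠ 0) ∧
      ∃ l : ℝ, Tendsto (fun n ↦ pev r (v (φ n)) / pev s (v (φ n))) atTop (𝓝 l) := by
  obtain ⟨φ, hφ, hconst⟩ :=
    exists_strictMono_eventuallyConst_sign_eval fun n ↦ ![(v n).1, (v n).2]
  refine ⟨φ, hφ, fun r s hs hcop hb ↦ ?_⟩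
  have hvφ : Tendsto (v ∘ φ) atTop (𝓝[≠] v₀) :=
    tendsto_nhdsWithin_iff.2 ⟨hv.comp hφ.tendsto_atTop, .of_forall fun n ↦ hne (φ n)⟩
  have hden : ∀ᶠ n in atTop, pev s (v (φ n)) ≠ 0 :=
    hvφ.eventually (hb.eventually_pev_ne_zero hs fun e ↦ hcop e)
  obtain ⟨U, hU, M, hM⟩ := hb
  have hbdd : ∀ᶠ n in atTop, |pev r (v (φ n)) / pev s (v (φ n))| ≤ M := by
    filter_upwards [hden, (hvφ.mono_right nhdsWithin_le_nhds).eventually_mem hU] with n hn hnU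
    exact hM _ hnU hn
  exact ⟨hden, exists_tendsto_div_of_eventuallyConst_sign_eval hconst hden hbdd⟩

/-- Every limiting value `d` of a bounded rational function at `v₀` is attained along a
sequence which simultaneously makes every rational function bounded near `v₀` eventually
defined and convergent. -/
theorem limval_attained_along_character_sequence (p q : MvPolynomial (Fin 2) ℝ)
    (hq : q ≠ 0) (hcop : ∀ d : MvPolynomial (Fin 2) ℝ, d ∣ p → d ∣ q → IsUnit d)
    (x₀ y₀ : ℝ) (hb : BoundedNear p q (x₀, y₀)) (d : ℝ)
    (hd : d ∈ LimVals p q (x₀, y₀)) :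
    ∃ v : ℕ → ℝ × ℝ, Tendsto v atTop (𝓝 ((x₀, y₀) : ℝ × ℝ)) ∧
      (∀ n, v n ≠ ((x₀ : ℝ), (y₀ : ℝ))) ∧
      Tendsto (fun n => pev p (v n) / pev q (v n)) atTop (𝓝 d) ∧
      ∀ r s : MvPolynomial (Fin 2) ℝ, s ≠ 0 →
        (∀ e : MvPolynomial (Fin 2) ℝ, e ∣ r → e ∣ s → IsUnit e) →
        BoundedNear r s (x₀, y₀) →
        (∀ᶠ n in atTop, pev s (v n) ≠ 0) ∧
        ∃ l : ℝ, Tendsto (fun n => pev r (v n) / pev s (v n)) atTop (𝓝 l) := by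
  obtain ⟨v, hv, hne, -, hlim⟩ := hd
  obtain ⟨φ, hφ, hconv⟩ := limval_attained_along_character_sequence_general hv hne
  exact ⟨v ∘ φ, hv.comp hφ.tendsto_atTop, fun n ↦ hne (φ n), hlim.comp hφ.tendsto_atTop, hconv⟩
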